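/- Weighted Poincaré inequality with axial weights for matrix fields (Lemma 2(b)): For every real δ ≠ 0, every ρ₀ > 0, and every continuously differentiable symmetric 2×2 matrix-valued function λ̄' on ℝ³ with compact support and vanishing on K_{ρ₀}, δ⁻² ∫_{Ω_{ρ₀}} |∇λ̄'|² ρ^{−2δ} dΣ ≥ ∫_{Ω_{ρ₀}} |λ̄'|² ρ^{−2δ−2} dΣ, where |λ̄'|² = λ̄'₁₁² + λ̄'₂₂² + 2λ̄'₁₂² = Tr(λ̄'ᵗλ̄') and |∇λ̄'|² is the corresponding sum over entries of |∇λ̄'_{ij}|². -/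

import Mathlib

/- Formalization preamble for:
   "Small deformations of extreme five-dimensional vacuum black hole initial data"
   Work on ℝ³ (Euclidean); cylindrical radius ρ(x)=√(x₀²+x₁²), axis coordinate z = x₂.
   The measure dΣ = ρ dρ dz dφ is Lebesgue measure on ℝ³. -/

open MeasureTheory Real
open scoped RealInnerProductSpace BigOperators

noncomputable section

namespace BHMass

/-- ℝ³ as a Euclidean space. -/
abbrev E3 : Type := EuclideanSpace ℝ (Fin 3)

/-- Cylindrical radius ρ. -/
def cylRho (x : E3) : ℝ := Real.sqrt ((x 0) ^ 2 + (x 1) ^ 2)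

/-- The solid cylinder K_{ρ₀} = {ρ ≤ ρ₀}. -/
def Kcyl (ρ₀ : ℝ) : Set E3 := {x | cylRho x ≤ ρ₀}

/-- Ω_{ρ₀} = ℝ³ ∖ K_{ρ₀}. -/
def Omg (ρ₀ : ℝ) : Set E3 := {x | ρ₀ < cylRho x}

/-- σ = √(r² + 1). -/
def sigmaW (x : E3) : ℝ := Real.sqrt (‖x‖ ^ 2 + 1)

/-- Flat gradient on ℝ³. -/
def grad (f : E3 → ℝ) : E3 → E3 := gradient f

/-- Flat Laplacian Δ₃. -/
def lap (f : E3 → ℝ) (x : E3) : ℝ :=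
  ∑ i : Fin 3, iteratedFDeriv ℝ 2 f x ![EuclideanSpace.single i 1, EuclideanSpace.single i 1]

/-- Flat divergence ∇· of a vector field. -/
def divg (V : E3 → E3) (x : E3) : ℝ :=
  ∑ i : Fin 3, fderiv ℝ (fun y => V y i) x (EuclideanSpace.single i 1)

/-- A scalar field is axisymmetric if it depends only on (ρ, z). -/
def Axisym (f : E3 → ℝ) : Prop :=
  ∀ x y : E3, cylRho x = cylRho y → x 2 = y 2 → f x = f y

abbrev Mat2 : Type := Matrix (Fin 2) (Fin 2) ℝ

/-- ∇Yᵗ A ∇Z = Σᵢⱼ Aᵢⱼ ⟪∇Yᵢ, ∇Zⱼ⟫ (gradients contracted with the flat metric). -/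
def quadG (A : Mat2) (Y Z : E3 → Fin 2 → ℝ) (x : E3) : ℝ :=
  ∑ i, ∑ j, A i j * ⟪grad (fun y => Y y i) x, grad (fun y => Z y j) x⟫

/-- aᵗ A b for 2-vectors. -/
def vecQuad (A : Mat2) (a b : Fin 2 → ℝ) : ℝ := ∑ i, ∑ j, a i * A i j * b j

/-- det(∇L) = ∇L₁₁·∇L₂₂ − ∇L₁₂·∇L₁₂. -/
def gradDet (L : E3 → Mat2) (x : E3) : ℝ :=
  ⟪grad (fun y => L y 0 0) x, grad (fun y => L y 1 1) x⟫ -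
    ⟪grad (fun y => L y 0 1) x, grad (fun y => L y 0 1) x⟫

/-- A data (or perturbation) triple u = (v, λ', Y). -/
structure Data where
  v : E3 → ℝ
  L : E3 → Mat2
  Y : E3 → Fin 2 → ℝ

/-- The zero triple. -/
def zeroData : Data := ⟨fun _ => 0, fun _ => 0, fun _ => 0⟩

/-- All components smooth. -/
def SmoothData (u : Data) : Prop :=
  ContDiff ℝ (⊤ : ℕ∞) u.v ∧ (∀ i j, ContDiff ℝ (⊤ : ℕ∞) fun x => u.L x i j) ∧
    ∀ i, ContDiff ℝ (⊤ : ℕ∞) fun x => u.Y x i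

/-- All components axisymmetric. -/
def AxisymData (u : Data) : Prop :=
  Axisym u.v ∧ (∀ i j, Axisym fun x => u.L x i j) ∧ ∀ i, Axisym fun x => u.Y x i

/-- λ = e^{2v} λ'. -/
def lamD (u : Data) (x : E3) : Mat2 := Real.exp (2 * u.v x) • u.L x

/-- X = det λ = e^{4v} ρ². -/
def XD (u : Data) (x : E3) : ℝ := Real.exp (4 * u.v x) * cylRho x ^ 2

/-- u + t·φ. -/
def addS (u φ : Data) (t : ℝ) : Data :=
  ⟨fun x => u.v x + t * φ.v x, fun x => u.L x + t • φ.L x, fun x => u.Y x + t • φ.Y x⟩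

/-- The expression σ^{-β} |f| + σ^{-β+1} |∇f| appearing in the C¹_β norm,
    for given pointwise magnitudes m = |f| and dm = |∇f|. -/
def c1Expr (β : ℝ) (m dm : E3 → ℝ) (x : E3) : ℝ :=
  sigmaW x ^ (-β) * m x + sigmaW x ^ (-β + 1) * dm x

/-- The weighted C¹_β norm over Ω. -/
def c1Norm (β : ℝ) (Ω : Set E3) (m dm : E3 → ℝ) : ℝ := ⨆ x ∈ Ω, c1Expr β m dm x

/-- Finiteness of the C¹_β norm over Ω. -/
def c1Fin (β : ℝ) (Ω : Set E3) (m dm : E3 → ℝ) : Prop := BddAbove (c1Expr β m dm '' Ω)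

/-- |M|² = Tr(MᵗM). -/
def matAbsSq (M : Mat2) : ℝ := ∑ i, ∑ j, (M i j) ^ 2

/-- |∇L|² (sum over entries of |∇L_{ij}|²). -/
def gradMatAbsSq (L : E3 → Mat2) (x : E3) : ℝ := ∑ i, ∑ j, ‖grad (fun y => L y i j) x‖ ^ 2

/-- The Banach norm ‖φ‖_B = ‖v̄‖_{C¹_β(ℝ³)} + ‖λ̄'‖_{C¹_β(Ω_{ρ₀})} + ‖Ȳ‖_{C¹_β(Ω_{ρ₀})},
    where |Ȳ| = (Ȳᵗ λ'₀⁻¹ Ȳ)^{1/2}, |∇Ȳ| = (∇Ȳᵗ λ'₀⁻¹ ∇Ȳ)^{1/2}. -/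
def BNorm (β ρ₀ : ℝ) (L0 : E3 → Mat2) (φ : Data) : ℝ :=
  c1Norm β Set.univ (fun x => |φ.v x|) (fun x => ‖grad φ.v x‖)
  + c1Norm β (Omg ρ₀) (fun x => Real.sqrt (matAbsSq (φ.L x)))
      (fun x => Real.sqrt (gradMatAbsSq φ.L x))
  + c1Norm β (Omg ρ₀) (fun x => Real.sqrt (vecQuad (L0 x)⁻¹ (φ.Y x) (φ.Y x)))
      (fun x => Real.sqrt (quadG (L0 x)⁻¹ φ.Y φ.Y x))

/-- Finiteness of ‖φ‖_B. -/
def FiniteB (β ρ₀ : ℝ) (L0 : E3 → Mat2) (φ : Data) : Prop :=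
  c1Fin β Set.univ (fun x => |φ.v x|) (fun x => ‖grad φ.v x‖) ∧
  c1Fin β (Omg ρ₀) (fun x => Real.sqrt (matAbsSq (φ.L x)))
      (fun x => Real.sqrt (gradMatAbsSq φ.L x)) ∧
  c1Fin β (Omg ρ₀) (fun x => Real.sqrt (vecQuad (L0 x)⁻¹ (φ.Y x) (φ.Y x)))
      (fun x => Real.sqrt (quadG (L0 x)⁻¹ φ.Y φ.Y x))

/-- Perturbation triple: smooth, axisymmetric, λ̄' and Ȳ vanishing on K_{ρ₀},
    λ̄' symmetric with det λ̄' = 0 and Tr(adj(λ'₀) λ̄') = 0. -/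
def IsPert (ρ₀ : ℝ) (L0 : E3 → Mat2) (φ : Data) : Prop :=
  SmoothData φ ∧ AxisymData φ ∧
  (∀ x, cylRho x ≤ ρ₀ → φ.L x = 0 ∧ φ.Y x = 0) ∧
  (∀ x, (φ.L x).IsSymm) ∧
  (∀ x, (φ.L x).det = 0) ∧
  (∀ x, ((L0 x).adjugate * φ.L x).trace = 0)

/-- Membership in the Banach space B. -/
def InB (β ρ₀ : ℝ) (L0 : E3 → Mat2) (φ : Data) : Prop :=
  IsPert ρ₀ L0 φ ∧ FiniteB β ρ₀ L0 φ

/-- The Hilbert norm squared ‖φ‖²_H = ‖v̄‖²_{H₁} + ‖λ̄'‖²_{H₂} + ‖Ȳ‖²_{H₃}. -/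
def HNormSq (ρ₀ : ℝ) (L0 : E3 → Mat2) (φ : Data) : ℝ :=
  (∫ x : E3, (‖grad φ.v x‖ ^ 2 / ‖x‖ ^ 2 + (φ.v x) ^ 2 / ‖x‖ ^ 4)) +
  (∫ x in Omg ρ₀, (gradMatAbsSq φ.L x / cylRho x ^ 2 + matAbsSq (φ.L x) / cylRho x ^ 4)) +
  (∫ x in Omg ρ₀, (quadG (L0 x)⁻¹ φ.Y φ.Y x / cylRho x ^ 2
      + vecQuad (L0 x)⁻¹ (φ.Y x) (φ.Y x) / cylRho x ^ 4))

/-- Bulk integrand of the mass functional. -/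
def massIntegrand (u : Data) (x : E3) : ℝ :=
  -gradDet u.L x / (2 * cylRho x ^ 2)
  + Real.exp (-(6 : ℝ) * u.v x) * quadG (u.L x)⁻¹ u.Y u.Y x / (2 * cylRho x ^ 2)
  + 6 * ‖grad u.v x‖ ^ 2

/-- The mass functional 𝓜, with rod boundary term R. -/
def massFun (R : (E3 → Mat2) → ℝ) (u : Data) : ℝ :=
  (1 / 8) * (∫ x : E3, massIntegrand u x) + R u.L

/-- The rod term depends only on λ' on the cylinder K_{ρ₀} (a neighbourhood of the
    axis), hence is unchanged by perturbations vanishing on K_{ρ₀}. -/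
def RodLocal (ρ₀ : ℝ) (R : (E3 → Mat2) → ℝ) : Prop :=
  ∀ L L' : E3 → Mat2, (∀ x, cylRho x ≤ ρ₀ → L x = L' x) → R L = R L'

/-- First stationary (Euler–Lagrange) equation: 4Δ₃v + X⁻¹ ∇Yᵗ λ⁻¹ ∇Y = 0. -/
def EL1 (u : Data) (x : E3) : Prop :=
  4 * lap u.v x + quadG (lamD u x)⁻¹ u.Y u.Y x / XD u x = 0

/-- Second stationary equation: ∇·(ρ⁻² ∇λ') + X⁻² e^{2v} ∇Y ∇Yᵗ = 0. -/
def EL2 (u : Data) (x : E3) : Prop :=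
  ∀ i j, divg (fun y => (cylRho y ^ 2)⁻¹ • grad (fun z => u.L z i j) y) x
    + Real.exp (2 * u.v x) / XD u x ^ 2 *
        ⟪grad (fun y => u.Y y i) x, grad (fun y => u.Y y j) x⟫ = 0

/-- Third stationary equation: ∇·(X⁻¹ λ⁻¹ ∇Y) = 0. -/
def EL3 (u : Data) (x : E3) : Prop :=
  ∀ i, divg (fun y => (XD u y)⁻¹ • ∑ j, ((lamD u y)⁻¹ i j) • grad (fun z => u.Y z j) y) x = 0

/-- |∇λ λ⁻¹|² (entrywise, gradients contracted with the flat metric). -/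
def gradLamLamInvSq (u : Data) (x : E3) : ℝ :=
  ∑ i, ∑ j, ‖∑ k, ((lamD u x)⁻¹ k j) • grad (fun y => lamD u y i k) x‖ ^ 2

/-- The bounds defining the extreme class (Definition 1, items 1–4); all pointwise
    bounds are imposed on the region ρ ≤ r². -/
def ExtremeBounds (ρ₀ : ℝ) (u : Data) : Prop :=
  ∃ C C₁ C₂ C₃ C₄ C' : ℝ, 0 < C ∧ 0 < C₁ ∧ 0 < C₂ ∧ 0 < C₃ ∧ 0 < C₄ ∧ 0 < C' ∧
    (∀ x : E3, 0 < cylRho x → cylRho x ≤ ‖x‖ ^ 2 →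
      quadG (lamD u x)⁻¹ u.Y u.Y x / XD u x ≤ C / ‖x‖ ^ 4 ∧
      Real.exp (-(2 : ℝ) * u.v x) * quadG (lamD u x)⁻¹ u.Y u.Y x / XD u x ≤ C / ‖x‖ ^ 2 ∧
      cylRho x ^ 2 ≤ XD u x ∧
      ‖grad u.v x‖ ^ 2 ≤ C / ‖x‖ ^ 4 ∧
      ‖grad (fun y => Real.log (XD u y)) x‖ ^ 2 ≤ C / cylRho x ^ 2) ∧
    (∀ x ∈ Omg ρ₀, cylRho x ≤ ‖x‖ ^ 2 →
      (lamD u x - (C₁ * cylRho x) • (1 : Mat2)).PosSemidef ∧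
      ((C₂ * cylRho x) • (1 : Mat2) - lamD u x).PosSemidef ∧
      ((lamD u x)⁻¹ - (C₃ / cylRho x) • (1 : Mat2)).PosSemidef ∧
      ((C₄ / cylRho x) • (1 : Mat2) - (lamD u x)⁻¹).PosSemidef ∧
      XD u x ^ 2 ≤ C' * cylRho x ^ 4 ∧
      gradLamLamInvSq u x ≤ C / cylRho x ^ 2)

/-- The potential X_t⁻¹ Ȳᵗ λ_t⁻¹ Ȳ + 16 v̄² whose Laplacian carries the boundary
    term in the integrated Carter identity. -/
def carterPot (u φ : Data) (t : ℝ) (y : E3) : ℝ :=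
  vecQuad (lamD (addS u φ t) y)⁻¹ (φ.Y y) (φ.Y y) / XD (addS u φ t) y + 16 * (φ.v y) ^ 2

/-- Rendering of condition (ii) of the extreme class: the decay and boundary
    conditions make all boundary terms arising in integration by parts against
    perturbations in B vanish (the total divergences integrate to zero). -/
def NoBoundaryTerms (β ρ₀ : ℝ) (u : Data) : Prop :=
  ∀ φ : Data, InB β ρ₀ u.L φ → ∀ t ∈ Set.Ico (0 : ℝ) 1,
    (∫ x : E3, lap (carterPot u φ t) x) = 0

/-- The extreme class E (Definition 1): smooth axisymmetric data with symmetric,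
    positive-definite λ'₀, det λ'₀ = ρ², satisfying the stationary field
    equations, the boundary conditions, and the extreme bounds. -/
def IsExtremeData (β ρ₀ : ℝ) (u : Data) : Prop :=
  SmoothData u ∧ AxisymData u ∧
  (∀ x, (u.L x).IsSymm) ∧
  (∀ x, (u.L x).det = cylRho x ^ 2) ∧
  (∀ x, 0 < cylRho x → (u.L x).PosDef) ∧
  (∀ x, 0 < cylRho x → EL1 u x ∧ EL2 u x ∧ EL3 u x) ∧
  NoBoundaryTerms β ρ₀ u ∧
  ExtremeBounds ρ₀ u

/-- Integrand of the second variation E''_φ(t). -/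
def svIntegrand (u φ : Data) (t : ℝ) (x : E3) : ℝ :=
  let w := addS u φ t
  12 * ‖grad φ.v x‖ ^ 2 - gradDet φ.L x / cylRho x ^ 2
  + Real.exp (-(6 : ℝ) * w.v x) / cylRho x ^ 4 *
      (2 * quadG (φ.L x).adjugate w.Y φ.Y x
        + quadG (w.L x).adjugate φ.Y φ.Y x
        - 6 * φ.v x * quadG (φ.L x).adjugate w.Y w.Y x
        - 12 * φ.v x * quadG (w.L x).adjugate w.Y φ.Y x
        + 18 * (φ.v x) ^ 2 * quadG (w.L x).adjugate w.Y w.Y x)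

/-- The second variation E''_φ(t). -/
def secondVar (u φ : Data) (t : ℝ) : ℝ := (1 / 8) * ∫ x : E3, svIntegrand u φ t x

/-- λ̄ = 2 v̄ λ + λ λ'⁻¹ λ̄'. -/
def lamBar (w φ : Data) (x : E3) : Mat2 :=
  (2 * φ.v x) • lamD w x + lamD w x * (w.L x)⁻¹ * φ.L x

/-- U₁ = X⁻¹ λ⁻¹ Ȳ. -/
def U1f (w φ : Data) (y : E3) : Fin 2 → ℝ := fun i =>
  (XD w y)⁻¹ * ∑ j, (lamD w y)⁻¹ i j * φ.Y y j

/-- U₂ = X⁻¹ λ⁻¹ ∇Y. -/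
def U2f (w : Data) (x : E3) (i : Fin 2) : E3 :=
  (XD w x)⁻¹ • ∑ j, ((lamD w x)⁻¹ i j) • grad (fun y => w.Y y j) x

/-- δU₂ = X⁻¹ λ⁻¹ ∇Ȳ − X⁻¹ λ⁻¹ λ̄ λ⁻¹ ∇Y − 4 v̄ U₂. -/
def dU2 (w φ : Data) (x : E3) (i : Fin 2) : E3 :=
  (XD w x)⁻¹ • ∑ j, ((lamD w x)⁻¹ i j) • grad (fun y => φ.Y y j) x
  - (XD w x)⁻¹ •
      ∑ j, (((lamD w x)⁻¹ * lamBar w φ x * (lamD w x)⁻¹) i j) • grad (fun y => w.Y y j) x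
  - (4 * φ.v x) • U2f w x i

/-- The matrix field ∇(λ̄ λ⁻¹) + X⁻¹ ∇Y Ȳᵗ λ⁻¹ (entries are vectors). -/
def MmatF (w φ : Data) (x : E3) (i j : Fin 2) : E3 :=
  grad (fun y => (lamBar w φ y * (lamD w y)⁻¹) i j) x
  + ((XD w x)⁻¹ * ∑ k, φ.Y x k * (lamD w x)⁻¹ k j) • grad (fun y => w.Y y i) x

/-- The manifestly nonnegative right-hand side F of the five-dimensional
    Carter identity. -/
def Fquant (w φ : Data) (x : E3) : ℝ :=
  ‖(4 : ℝ) • grad φ.v x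
      + (XD w x)⁻¹ • ∑ i, ∑ j, (φ.Y x i * (lamD w x)⁻¹ i j) • grad (fun y => w.Y y j) x‖ ^ 2
  + XD w x * ((∑ i, ∑ j, lamD w x i j * ⟪dU2 w φ x i, dU2 w φ x j⟫)
      + ∑ i, ∑ j, lamD w x i j *
          ⟪grad (fun y => U1f w φ y i) x, grad (fun y => U1f w φ y j) x⟫)
  + ∑ i, ∑ j, ⟪MmatF w φ x i j, MmatF w φ x j i⟫

/-- G_X = 4Δ₃v + X⁻¹ ∇Yᵗ λ⁻¹ ∇Y. -/
def GX (w : Data) (x : E3) : ℝ := 4 * lap w.v x + quadG (lamD w x)⁻¹ w.Y w.Y x / XD w x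

/-- G_λ = ∇·(λ⁻¹∇λ) + X⁻¹ λ⁻¹ ∇Y·∇Yᵗ. -/
def Glam (w : Data) (x : E3) : Mat2 := Matrix.of fun i j =>
  divg (fun y => ∑ k, ((lamD w y)⁻¹ i k) • grad (fun z => lamD w z k j) y) x
  + (XD w x)⁻¹ * ∑ k, (lamD w x)⁻¹ i k *
      ⟪grad (fun y => w.Y y k) x, grad (fun y => w.Y y j) x⟫

/-- G_Y = ∇·(X⁻¹ λ⁻¹ ∇Y). -/
def GYv (w : Data) (x : E3) : Fin 2 → ℝ := fun i =>
  divg (fun y => (XD w y)⁻¹ • ∑ j, ((lamD w y)⁻¹ i j) • grad (fun z => w.Y z j) y) x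

/-- Linearized operator Ġ_X at data w in direction φ. -/
def GXdot (w φ : Data) (x : E3) : ℝ :=
  4 * lap φ.v x + Real.exp (-(6 : ℝ) * w.v x) / cylRho x ^ 4 *
    (2 * quadG (w.L x).adjugate φ.Y w.Y x
      + quadG (φ.L x).adjugate w.Y w.Y x
      - 6 * φ.v x * quadG (w.L x).adjugate w.Y w.Y x)

/-- δ(λ'⁻¹ ∇λ') = λ'⁻¹ ∇λ̄' − λ'⁻¹ λ̄' λ'⁻¹ ∇λ' (first variation of λ'⁻¹∇λ'). -/
def deltaLinvGradL (w φ : Data) (y : E3) (i j : Fin 2) : E3 :=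
  ∑ k, ((w.L y)⁻¹ i k) • grad (fun z => φ.L z k j) y
  - ∑ k, (((w.L y)⁻¹ * φ.L y * (w.L y)⁻¹) i k) • grad (fun z => w.L z k j) y

/-- Linearized operator Ġ_λ at data w in direction φ. -/
def Gldot (w φ : Data) (x : E3) : Mat2 := Matrix.of fun i j =>
  2 * lap φ.v x * ((1 : Mat2) i j)
  + divg (fun y => deltaLinvGradL w φ y i j) x
  + Real.exp (-(6 : ℝ) * w.v x) / cylRho x ^ 4 *
      (2 * ∑ k, (w.L x).adjugate i k *
          ⟪grad (fun y => w.Y y k) x, grad (fun y => φ.Y y j) x⟫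
        + ∑ k, (φ.L x).adjugate i k *
            ⟪grad (fun y => w.Y y k) x, grad (fun y => w.Y y j) x⟫
        - 6 * φ.v x * ∑ k, (w.L x).adjugate i k *
            ⟪grad (fun y => w.Y y k) x, grad (fun y => w.Y y j) x⟫)

/-- Linearized operator Ġ_Y at data w in direction φ. -/
def GYdot (w φ : Data) (x : E3) : Fin 2 → ℝ := fun i =>
  divg (fun y => (Real.exp (-(6 : ℝ) * w.v y) / cylRho y ^ 4) •
      (∑ j, ((w.L y).adjugate i j) • grad (fun z => φ.Y z j) y
        + ∑ j, ((φ.L y).adjugate i j) • grad (fun z => w.Y z j) y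
        - (6 * φ.v y) • ∑ j, ((w.L y).adjugate i j) • grad (fun z => w.Y z j) y)) x


/-- Square of the cylindrical radius. -/
def qf (x : E3) : ℝ := (x 0) ^ 2 + (x 1) ^ 2

lemma qf_nonneg (x : E3) : 0 ≤ qf x := by unfold qf; positivity

lemma cylRho_rpow (x : E3) (r : ℝ) : cylRho x ^ r = qf x ^ (r / 2) := by
  change Real.sqrt (qf x) ^ r = _
  rw [Real.sqrt_eq_rpow, ← Real.rpow_mul (qf_nonneg x)]
  congr 1
  ring

lemma cylRho_sq (x : E3) : cylRho x ^ 2 = qf x := Real.sq_sqrt (qf_nonneg x)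

lemma contDiff_qf : ContDiff ℝ 1 qf := by
  unfold qf
  fun_prop

lemma qf_lt_iff {ρ₀ : ℝ} (h : 0 < ρ₀) (x : E3) : qf x < ρ₀ ^ 2 ↔ cylRho x < ρ₀ := by
  rw [← cylRho_sq]
  have := Real.sqrt_nonneg ((x 0) ^ 2 + (x 1) ^ 2)
  exact pow_lt_pow_iff_left₀ this h.le (by norm_num)

lemma eventually_zero {ρ₀ : ℝ} {h : E3 → ℝ} (hv : ∀ x, qf x < ρ₀ ^ 2 → h x = 0)
    {x : E3} (hx : qf x < ρ₀ ^ 2) : h =ᶠ[nhds x] fun _ => 0 := by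
  filter_upwards [(isOpen_lt contDiff_qf.continuous continuous_const).mem_nhds hx] with y hy
  exact hv y hy

lemma contDiff_mul_w {ρ₀ : ℝ} (hρ : 0 < ρ₀) {h : E3 → ℝ} {n : ℕ∞} (hn : n ≤ 1)
    (hc : ContDiff ℝ n h)
    (hv : ∀ x, qf x < ρ₀ ^ 2 → h x = 0) (p : ℝ) : ContDiff ℝ n fun x => h x * qf x ^ p := by
  rw [contDiff_iff_contDiffAt]
  intro x
  by_cases hx : qf x = 0
  · have : h =ᶠ[nhds x] fun _ => 0 := eventually_zero hv (by rw [hx]; positivity)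
    have h2 : (fun x => h x * qf x ^ p) =ᶠ[nhds x] fun _ => 0 := by
      filter_upwards [this] with y hy
      simp [hy]
    exact contDiffAt_const.congr_of_eventuallyEq h2
  · have hq : ContDiffAt ℝ n qf x := (contDiff_qf.of_le (by exact_mod_cast hn)).contDiffAt
    exact hc.contDiffAt.mul (hq.rpow_const_of_ne hx)

lemma integrable_mul_w {ρ₀ : ℝ} (hρ : 0 < ρ₀) {h : E3 → ℝ} (hc : Continuous h)
    (hs : HasCompactSupport h)
    (hv : ∀ x, qf x < ρ₀ ^ 2 → h x = 0) (p : ℝ) : Integrable fun x => h x * qf x ^ p := by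
  have h1 : ContDiff ℝ ((0 : ℕ∞) : WithTop ℕ∞) h := by
    exact_mod_cast contDiff_zero.2 hc
  exact (contDiff_mul_w hρ (by norm_num) h1 hv p).continuous.integrable_of_hasCompactSupport
    hs.mul_right

lemma integral_fderiv_zero {g : E3 → ℝ} (hg : ContDiff ℝ 1 g) (hs : HasCompactSupport g) (v : E3) :
    Integrable (fun x => fderiv ℝ g x v) ∧ ∫ x, fderiv ℝ g x v = 0 := by
  have hi : Integrable (fun x => fderiv ℝ g x v) := by
    refine Continuous.integrable_of_hasCompactSupport ?_ (hs.fderiv_apply (𝕜 := ℝ) v)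
    exact (hg.continuous_fderiv (by norm_num)).clm_apply continuous_const
  refine ⟨hi, ?_⟩
  have := integral_mul_fderiv_eq_neg_fderiv_mul_of_integrable (μ := (volume : Measure E3))
    (f := fun _ : E3 => (1 : ℝ)) (g := g) (v := v) (by simp) (by simpa using hi)
    (by simpa using hg.continuous.integrable_of_hasCompactSupport hs)
    (fun x _ => differentiableAt_const _)
    (fun x _ => hg.differentiable (by norm_num) x)
  simpa using this

/-- Horizontal part of the position vector. -/
def Pv (x : E3) : E3 := x 0 • EuclideanSpace.single 0 1 + x 1 • EuclideanSpace.single 1 1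

lemma norm_Pv (x : E3) : ‖Pv x‖ ^ 2 = qf x := by
  rw [EuclideanSpace.norm_sq_eq]
  simp [Pv, qf, Fin.sum_univ_three]

lemma fderiv_G {f : E3 → ℝ} (hf : ContDiff ℝ 1 f) (p : ℝ) {x : E3} (hx : qf x ≠ 0) (i : Fin 3)
    (hi : i = 0 ∨ i = 1) :
    fderiv ℝ (fun y => (f y ^ 2 * y i) * qf y ^ p) x (EuclideanSpace.single i 1) =
      2 * (f x * (x i * fderiv ℝ f x (EuclideanSpace.single i 1)) * qf x ^ p) +
        (f x ^ 2 * qf x ^ p + f x ^ 2 * (2 * p * x i ^ 2 * qf x ^ (p - 1))) := by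
  have hfd : HasFDerivAt f (fderiv ℝ f x) x := (hf.differentiable (by norm_num) x).hasFDerivAt
  have hc : ∀ j : Fin 3, HasFDerivAt (fun y : E3 => y j)
      (EuclideanSpace.proj j : E3 →L[ℝ] ℝ) x := fun j =>
    (EuclideanSpace.proj j : E3 →L[ℝ] ℝ).hasFDerivAt
  have hq : HasFDerivAt qf _ x := ((hc 0).pow 2).add ((hc 1).pow 2)
  have hw := hq.rpow_const (p := p) (Or.inl hx)
  have := (((hfd.pow 2).mul (hc i)).mul hw).fderiv
  have e : (fun y => (f y ^ 2 * y i) * qf y ^ p) =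
    (((fun y => f y ^ 2) * fun y : E3 => y i) * fun y => qf y ^ p) := rfl
  rw [e, this]
  rcases hi with rfl | rfl <;> simp <;> ring

lemma key_identity {δ ρ₀ : ℝ} (hρ : 0 < ρ₀) {f : E3 → ℝ} (hf : ContDiff ℝ 1 f)
    (hs : HasCompactSupport f) (hv : ∀ x, qf x < ρ₀ ^ 2 → f x = 0) :
    ∫ x, (f x * fderiv ℝ f x (Pv x)) * qf x ^ (-δ - 1) =
      δ * ∫ x, f x ^ 2 * qf x ^ (-δ - 1) := by
  have hG : ∀ i : Fin 3, ContDiff ℝ 1 fun y : E3 => (f y ^ 2 * y i) * qf y ^ (-δ - 1) := by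
    intro i
    refine contDiff_mul_w (n := 1) hρ le_rfl ?_ ?_ _
    · have : ContDiff ℝ 1 fun y : E3 => f y ^ 2 * y i := by fun_prop
      exact_mod_cast this
    · intro x hx
      simp [hv x hx]
  have hGs : ∀ i : Fin 3, HasCompactSupport fun y : E3 => (f y ^ 2 * y i) * qf y ^ (-δ - 1) := by
    intro i
    refine hs.mono ?_
    intro x hx
    simp only [Function.mem_support] at hx ⊢
    intro h0
    simp [h0] at hx
  obtain ⟨i0, z0⟩ := integral_fderiv_zero (hG 0) (hGs 0) (EuclideanSpace.single 0 1)
  obtain ⟨i1, z1⟩ := integral_fderiv_zero (hG 1) (hGs 1) (EuclideanSpace.single 1 1)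
  have hP : Continuous Pv := by unfold Pv; fun_prop
  have hD : Continuous fun x => fderiv ℝ f x (Pv x) :=
    (hf.continuous_fderiv (by norm_num)).clm_apply hP
  have I1 : Integrable fun x => (f x * fderiv ℝ f x (Pv x)) * qf x ^ (-δ - 1) :=
    integrable_mul_w hρ (hf.continuous.mul hD) hs.mul_right (fun x hx => by simp [hv x hx]) _
  have I2 : Integrable fun x => f x ^ 2 * qf x ^ (-δ - 1) :=
    integrable_mul_w hρ (hf.continuous.pow 2)
      (by simpa only [pow_two] using hs.mul_right (f' := f)) (fun x hx => by simp [hv x hx]) _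
  have hsum := integral_add i0 i1
  rw [z0, z1] at hsum
  have hpt : (fun x => fderiv ℝ (fun y : E3 => (f y ^ 2 * y 0) * qf y ^ (-δ - 1)) x
        (EuclideanSpace.single 0 1) +
      fderiv ℝ (fun y : E3 => (f y ^ 2 * y 1) * qf y ^ (-δ - 1)) x (EuclideanSpace.single 1 1)) =
      fun x => 2 * ((f x * fderiv ℝ f x (Pv x)) * qf x ^ (-δ - 1)) -
        2 * δ * (f x ^ 2 * qf x ^ (-δ - 1)) := by
    funext x
    by_cases hx : qf x = 0
    · have hlt : qf x < ρ₀ ^ 2 := by rw [hx]; positivity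
      have h0 := eventually_zero hv hlt
      have hz : ∀ i : Fin 3, (fun y : E3 => (f y ^ 2 * y i) * qf y ^ (-δ - 1)) =ᶠ[nhds x]
          fun _ => 0 := by
        intro i
        filter_upwards [h0] with y hy
        simp [hy]
      rw [(hz 0).fderiv_eq, (hz 1).fderiv_eq, hv x hlt]
      simp
    · rw [fderiv_G hf _ hx 0 (Or.inl rfl), fderiv_G hf _ hx 1 (Or.inr rfl)]
      have e1 : qf x ^ (-δ - 1) = qf x * qf x ^ (-δ - 1 - 1) := by
        rw [Real.rpow_sub_one hx (-δ - 1)]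
        field_simp
      have e2 : fderiv ℝ f x (Pv x) = x 0 * fderiv ℝ f x (EuclideanSpace.single 0 1) +
          x 1 * fderiv ℝ f x (EuclideanSpace.single 1 1) := by
        simp [Pv]
      rw [e2, e1]
      unfold qf
      ring
  rw [hpt, integral_sub (I1.const_mul 2) (I2.const_mul (2 * δ)), integral_const_mul,
    integral_const_mul] at hsum
  linarith

lemma grad_integrable {ρ₀ : ℝ} (hρ : 0 < ρ₀) {f : E3 → ℝ} (hf : ContDiff ℝ 1 f)
    (hs : HasCompactSupport f) (hv : ∀ x, qf x < ρ₀ ^ 2 → f x = 0) (p : ℝ) :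
    Integrable fun x => ‖grad f x‖ ^ 2 * qf x ^ p := by
  have hn : ∀ x, ‖grad f x‖ = ‖fderiv ℝ f x‖ := by
    intro x
    simp [grad, gradient]
  simp only [hn]
  refine integrable_mul_w hρ ((hf.continuous_fderiv (by norm_num)).norm.pow 2) ?_ ?_ p
  · refine (hs.fderiv (𝕜 := ℝ)).mono ?_
    intro x hx
    simp only [Function.mem_support] at hx ⊢
    intro h0
    simp [h0] at hx
  · intro x hx
    change ‖fderiv ℝ f x‖ ^ 2 = 0
    rw [(eventually_zero hv hx).fderiv_eq]
    simp

lemma sq_integrable {ρ₀ : ℝ} (hρ : 0 < ρ₀) {f : E3 → ℝ} (hf : ContDiff ℝ 1 f)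
    (hs : HasCompactSupport f) (hv : ∀ x, qf x < ρ₀ ^ 2 → f x = 0) (p : ℝ) :
    Integrable fun x => f x ^ 2 * qf x ^ p :=
  integrable_mul_w hρ (hf.continuous.pow 2)
    (by simpa only [pow_two] using hs.mul_right (f' := f)) (fun x hx => by simp [hv x hx]) _

lemma scalar_poincare {δ ρ₀ : ℝ} (hδ : δ ≠ 0) (hρ : 0 < ρ₀) {f : E3 → ℝ} (hf : ContDiff ℝ 1 f)
    (hs : HasCompactSupport f) (hv : ∀ x, cylRho x ≤ ρ₀ → f x = 0) :
    (∫ x in Omg ρ₀, f x ^ 2 * qf x ^ (-δ - 1)) ≤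
      δ⁻¹ ^ 2 * ∫ x in Omg ρ₀, ‖grad f x‖ ^ 2 * qf x ^ (-δ) := by
  have hv' : ∀ x, qf x < ρ₀ ^ 2 → f x = 0 := fun x hx =>
    hv x ((qf_lt_iff hρ x).1 hx).le
  have hP : Continuous Pv := by unfold Pv; fun_prop
  have hD : Continuous fun x => fderiv ℝ f x (Pv x) :=
    (hf.continuous_fderiv (by norm_num)).clm_apply hP
  have I1 : Integrable fun x => (f x * fderiv ℝ f x (Pv x)) * qf x ^ (-δ - 1) :=
    integrable_mul_w hρ (hf.continuous.mul hD) hs.mul_right (fun x hx => by simp [hv' x hx]) _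
  have I2 := sq_integrable hρ hf hs hv' (-δ - 1)
  have I3 := grad_integrable hρ hf hs hv' (-δ)
  have hkey := key_identity (δ := δ) hρ hf hs hv'
  have hout : ∀ x, x ∉ Omg ρ₀ → f x = 0 := fun x hx => hv x (not_lt.1 hx)
  rw [← setIntegral_eq_integral_of_forall_compl_eq_zero (s := Omg ρ₀)
      (fun x hx => by simp [hout x hx]),
    ← setIntegral_eq_integral_of_forall_compl_eq_zero (s := Omg ρ₀)
      (f := fun x => f x ^ 2 * qf x ^ (-δ - 1)) (fun x hx => by simp [hout x hx])] at hkey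
  have hmeas : MeasurableSet (Omg ρ₀) := by
    have : IsOpen (Omg ρ₀) := by
      refine isOpen_lt continuous_const ?_
      unfold cylRho
      fun_prop
    exact this.measurableSet
  have hmono : ∫ x in Omg ρ₀, (2 * δ⁻¹ * ((f x * fderiv ℝ f x (Pv x)) * qf x ^ (-δ - 1)) -
      f x ^ 2 * qf x ^ (-δ - 1)) ≤
      ∫ x in Omg ρ₀, δ⁻¹ ^ 2 * (‖grad f x‖ ^ 2 * qf x ^ (-δ)) := by
    refine setIntegral_mono_on ((I1.const_mul _).sub I2).integrableOn
      (I3.const_mul _).integrableOn hmeas ?_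
    intro x hx
    have hq : 0 < qf x := by
      rw [← cylRho_sq]
      have : 0 < cylRho x := hρ.trans hx
      positivity
    have e1 : qf x ^ (-δ) = qf x * qf x ^ (-δ - 1) := by
      rw [Real.rpow_sub_one hq.ne' (-δ)]
      field_simp
    have hw : 0 ≤ qf x ^ (-δ - 1) := Real.rpow_nonneg hq.le _
    have hcs : (fderiv ℝ f x (Pv x)) ^ 2 ≤ ‖grad f x‖ ^ 2 * qf x := by
      rw [← norm_Pv, ← mul_pow, ← inner_gradient_left]
      exact sq_le_sq' (neg_le_of_abs_le (abs_real_inner_le_norm _ _))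
        (real_inner_le_norm _ _)
    have hb : 2 * δ⁻¹ * (f x * fderiv ℝ f x (Pv x)) - f x ^ 2 ≤
        δ⁻¹ ^ 2 * (‖grad f x‖ ^ 2 * qf x) := by
      have := mul_le_mul_of_nonneg_left hcs (sq_nonneg δ⁻¹)
      nlinarith [sq_nonneg (f x - δ⁻¹ * fderiv ℝ f x (Pv x))]
    rw [e1]
    have := mul_le_mul_of_nonneg_right hb hw
    nlinarith [this]
  rw [integral_sub (I1.const_mul _).integrableOn I2.integrableOn, integral_const_mul,
    integral_const_mul, hkey] at hmono
  have : 2 * δ⁻¹ * (δ * ∫ x in Omg ρ₀, f x ^ 2 * qf x ^ (-δ - 1)) =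
      2 * ∫ x in Omg ρ₀, f x ^ 2 * qf x ^ (-δ - 1) := by
    field_simp
  linarith

/-- Lemma 2(b): weighted Poincaré inequality with axial weights for
symmetric 2×2 matrix fields vanishing on K_{ρ₀}:
δ⁻² ∫_{Ω_{ρ₀}} |∇λ̄'|² ρ^{−2δ} dΣ ≥ ∫_{Ω_{ρ₀}} |λ̄'|² ρ^{−2δ−2} dΣ. -/
theorem weighted_poincare_matrix (δ ρ₀ : ℝ) (hδ : δ ≠ 0) (hρ₀ : 0 < ρ₀)
    (L : E3 → Mat2) (hL : ∀ i j, ContDiff ℝ 1 fun x => L x i j)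
    (hsymm : ∀ x, (L x).IsSymm)
    (hsupp : ∀ i j, HasCompactSupport fun x => L x i j)
    (hvan : ∀ x, cylRho x ≤ ρ₀ → L x = 0) :
    (∫ x in Omg ρ₀, matAbsSq (L x) * cylRho x ^ (-2 * δ - 2)) ≤
      δ⁻¹ ^ 2 * ∫ x in Omg ρ₀, gradMatAbsSq L x * cylRho x ^ (-2 * δ) := by
  have hE : ∀ i j x, cylRho x ≤ ρ₀ → L x i j = 0 := fun i j x hx => by rw [hvan x hx]; rfl
  have hE' : ∀ i j x, qf x < ρ₀ ^ 2 → L x i j = 0 := fun i j x hx =>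
    hE i j x ((qf_lt_iff hρ₀ x).1 hx).le
  have r1 : (-2 * δ - 2) / 2 = -δ - 1 := by ring
  have r2 : (-2 * δ) / 2 = -δ := by ring
  simp only [cylRho_rpow, r1, r2, matAbsSq, gradMatAbsSq, Finset.sum_mul]
  rw [integral_finsetSum _ fun i _ => integrable_finsetSum _ fun j _ =>
      (sq_integrable hρ₀ (hL i j) (hsupp i j) (hE' i j) _).integrableOn,
    integral_finsetSum _ fun i _ => integrable_finsetSum _ fun j _ =>
      (grad_integrable hρ₀ (hL i j) (hsupp i j) (hE' i j) _).integrableOn, Finset.mul_sum]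
  refine Finset.sum_le_sum fun i _ => ?_
  rw [integral_finsetSum _ fun j _ =>
      (sq_integrable hρ₀ (hL i j) (hsupp i j) (hE' i j) _).integrableOn,
    integral_finsetSum _ fun j _ =>
      (grad_integrable hρ₀ (hL i j) (hsupp i j) (hE' i j) _).integrableOn, Finset.mul_sum]
  exact Finset.sum_le_sum fun j _ => scalar_poincare hδ hρ₀ (hL i j) (hsupp i j) (hE i j)

end BHMass
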